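/- Let {e₁, f₁} be a standard basis of a fixed copy U₁ of the hyperbolic plane inside U³ = U₁ ⊕ U ⊕ U. For every integer d ≥ 1, the group SO^+(U³) is generated by the union of the four stabilizer subgroups SO^+_{e₁+df₁}(U³) ∪ SO^+_{de₁+f₁}(U³) ∪ SO^+_{e₁+(d+1)f₁}(U³) ∪ SO^+_{(d+1)e₁+f₁}(U³). -/

import Mathlib

open Matrix

/-- The ℝ-bilinear extension of the integral bilinear form with Gram matrix `M`. -/
def bilinR {ι : Type*} [Fintype ι] (M : Matrix ι ι ℤ) (x y : ι → ℝ) : ℝ :=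
  x ⬝ᵥ ((M.map (Int.cast : ℤ → ℝ)) *ᵥ y)

/-- `w` is a tuple of vectors of `L ⊗ ℝ` spanning a maximal positive definite subspace:
its Gram matrix is positive definite and no longer tuple has positive definite Gram matrix. -/
def IsMaxPosTuple {ι : Type*} [Fintype ι] (M : Matrix ι ι ℤ) {k : ℕ}
    (w : Fin k → ι → ℝ) : Prop :=
  (Matrix.of fun i j => bilinR M (w i) (w j)).PosDef ∧
    ∀ w' : Fin (k + 1) → ι → ℝ,
      ¬ (Matrix.of fun i j => bilinR M (w' i) (w' j)).PosDef

/-- `g` preserves the orientation of the positive cone of the lattice with Gram matrix `M`: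
for every basis `w` of a maximal positive definite subspace `W` of `L ⊗ ℝ`, the determinant of
the matrix `(B(wᵢ, g wⱼ))` (which equals, up to the positive factor `det (Gram w)`, the
determinant of the orthogonal projection of `g|_W` back to `W`) is positive. -/
def OrientPres {ι : Type*} [Fintype ι] (M : Matrix ι ι ℤ) (g : Matrix ι ι ℤ) : Prop :=
  ∀ (k : ℕ) (w : Fin k → ι → ℝ), IsMaxPosTuple M w →
    0 < (Matrix.of fun i j : Fin k =>
          bilinR M (w i) ((g.map (Int.cast : ℤ → ℝ)) *ᵥ w j)).det

/-- `g` is an isometry of the lattice with Gram matrix `M`. -/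
def IsIsometry {ι : Type*} [Fintype ι] (M : Matrix ι ι ℤ) (g : Matrix ι ι ℤ) : Prop :=
  gᵀ * M * g = M

/-- A vector of a lattice is primitive if it is divisible only by units. -/
def IsPrimitiveVec {ι : Type*} (l : ι → ℤ) : Prop :=
  ∀ (c : ℤ) (x : ι → ℤ), l = c • x → IsUnit c

/-- The Gram matrix of `U³` in the standard basis `e₁, f₁, e₂, f₂, e₃, f₃`. -/
def U3G : Matrix (Fin 6) (Fin 6) ℤ :=
  !![0,1,0,0,0,0;
     1,0,0,0,0,0;
     0,0,0,1,0,0;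
     0,0,1,0,0,0;
     0,0,0,0,0,1;
     0,0,0,0,1,0]

/-- The stabilizer of a vector `v` inside `SO⁺(U³)`, as a subset of
`GL(U³) = (Matrix (Fin 6) (Fin 6) ℤ)ˣ`. -/
def SOplusStab (v : Fin 6 → ℤ) : Set ((Matrix (Fin 6) (Fin 6) ℤ)ˣ) :=
  {g | IsIsometry U3G (g : Matrix (Fin 6) (Fin 6) ℤ) ∧
    (g : Matrix (Fin 6) (Fin 6) ℤ).det = 1 ∧
    OrientPres U3G (g : Matrix (Fin 6) (Fin 6) ℤ) ∧
    (g : Matrix (Fin 6) (Fin 6) ℤ) *ᵥ v = v}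

/-!
The lattice is an orthogonal sum of hyperbolic planes `⟨e_p, e_{σ p}⟩`, and the elementary
transvections `x_i += n x_j`, `x_{σ j} -= n x_{σ i}` are Eichler transvections, hence lie in
`SO⁺`: joined to the identity by isometries over `ℝ`, they preserve orientations.

They generate `SO⁺`. A Euclidean algorithm on coordinates carries the image of `e_p` under
`g ∈ SO⁺` back to `e_p` and then that of `e_{σ p}` back to `e_{σ p}`, so planes can be split off
one by one as long as a second plane is left to work with. On the last plane an isometry is `±1`
or `±` the exchange of `e_p` and `e_{σ p}`; the determinant excludes the exchanges and the
orientation excludes `-1`.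

For `i` outside the plane of `p`, write `T_q(n)` for the transvection `x_i += n x_q`. Then
`T_p(-n d) T_{σ p}(n)` fixes `e_p + d e_{σ p}`, and dividing it by the same product for `d + 1`
leaves `T_p(n)`. Exchanging `p` and `σ p` gives `T_{σ p}(n)`, and every other transvection fixes
the plane of `p` or is of one of these forms after `(i, j) ↦ (σ j, σ i)`.
-/

section Orientation

variable {V : Type*} [AddCommGroup V] [Module ℝ V] {B : LinearMap.BilinForm ℝ V}

/-- The matrix of mutual products `B (w i) (w' j)` of two tuples of vectors. For `w = w'` it is
the Gram matrix; in general the sign of its determinant compares the orientations of the spans of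
`w` and `w'`. -/
def crossGram {κ : Type*} (B : LinearMap.BilinForm ℝ V) (w w' : κ → V) : Matrix κ κ ℝ :=
  of fun i j => B (w i) (w' j)

/-- The coordinate-free counterpart of `IsMaxPosTuple`: `w` is a basis of a maximal positive
definite subspace. -/
def IsMaxPositive {k : ℕ} (B : LinearMap.BilinForm ℝ V) (w : Fin k → V) : Prop :=
  (crossGram B w w).PosDef ∧ ∀ w' : Fin (k + 1) → V, ¬ (crossGram B w' w').PosDef

/-- The coordinate-free counterpart of `OrientPres`. -/
def PreservesOrientation (B : LinearMap.BilinForm ℝ V) (φ : V →ₗ[ℝ] V) : Prop :=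
  ∀ (k : ℕ) (w : Fin k → V), IsMaxPositive B w → 0 < (crossGram B w (φ ∘ w)).det

section CrossGram

variable {κ : Type*} {w w' : κ → V}

lemma transpose_crossGram (hB : B.IsSymm) (w w' : κ → V) :
    (crossGram B w w')ᵀ = crossGram B w' w := by
  ext i j
  exact hB.eq _ _

lemma crossGram_comp_comp {φ : V →ₗ[ℝ] V} (hφ : ∀ x y, B (φ x) (φ y) = B x y) (w w' : κ → V) :
    crossGram B (φ ∘ w) (φ ∘ w') = crossGram B w w' := by
  ext i j
  exact hφ _ _

variable [Fintype κ]

lemma crossGram_mulVec_apply (w w' : κ → V) (c : κ → ℝ) (i : κ) :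
    (crossGram B w w' *ᵥ c) i = B (w i) (Fintype.linearCombination ℝ w' c) := by
  simp [crossGram, mulVec, dotProduct, Fintype.linearCombination_apply, mul_comm]

lemma crossGram_linearCombination (w w' : κ → V) (C : Matrix κ κ ℝ) :
    crossGram B w (fun j => Fintype.linearCombination ℝ w' (C.col j)) = crossGram B w w' * C := by
  ext i j
  exact (crossGram_mulVec_apply w w' (C.col j) i).symm

lemma apply_linearCombination_linearCombination (w w' : κ → V) (c c' : κ → ℝ) :
    B (Fintype.linearCombination ℝ w c) (Fintype.linearCombination ℝ w' c') =
      c ⬝ᵥ (crossGram B w w' *ᵥ c') := by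
  simp [dotProduct, crossGram_mulVec_apply, Fintype.linearCombination_apply ℝ w]

lemma posDef_crossGram_self_iff (hB : B.IsSymm) :
    (crossGram B w w).PosDef ↔ ∀ c : κ → ℝ, c ≠ 0 →
      0 < B (Fintype.linearCombination ℝ w c) (Fintype.linearCombination ℝ w c) := by
  simp only [apply_linearCombination_linearCombination, posDef_iff_dotProduct_mulVec,
    star_trivial, IsHermitian, conjTranspose_eq_transpose_of_trivial, transpose_crossGram hB,
    true_and, ne_eq]

lemma exists_orthogonal_sub_linearCombination (h : (crossGram B w w).PosDef)
    (w' : κ → V) :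
    ∃ C : Matrix κ κ ℝ, ∀ i j, B (w i) (w' j - Fintype.linearCombination ℝ w (C.col j)) = 0 := by
  classical
  refine ⟨(crossGram B w w)⁻¹ * crossGram B w w', fun i j => ?_⟩
  rw [map_sub, sub_eq_zero]
  have hmul := mul_nonsing_inv_cancel_left (crossGram B w w) (crossGram B w w')
    h.det_pos.ne'.isUnit
  rw [← crossGram_linearCombination] at hmul
  exact (congrFun₂ hmul i j).symm

end CrossGram

lemma IsMaxPositive.comp {k : ℕ} {w : Fin k → V} (hw : IsMaxPositive B w) {φ : V →ₗ[ℝ] V}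
    (hφ : ∀ x y, B (φ x) (φ y) = B x y) : IsMaxPositive B (φ ∘ w) :=
  ⟨(crossGram_comp_comp hφ w w).symm ▸ hw.1, hw.2⟩

lemma IsMaxPositive.apply_self_nonpos (hB : B.IsSymm) {k : ℕ} {w : Fin k → V}
    (hw : IsMaxPositive B w) {u : V} (hu : ∀ i, B (w i) u = 0) : B u u ≤ 0 := by
  by_contra! hpos
  refine hw.2 (Fin.cons u w) ((posDef_crossGram_self_iff hB).2 fun c hc => ?_)
  set x := Fintype.linearCombination ℝ w (Fin.tail c) with hx
  have hcomb : Fintype.linearCombination ℝ (Fin.cons u w : Fin (k + 1) → V) c = c 0 • u + x := by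
    simp [hx, Fintype.linearCombination_apply, Fin.sum_univ_succ, Fin.tail]
  have hxu : B x u = 0 := by simp [hx, Fintype.linearCombination_apply, hu]
  have hsplit : B (c 0 • u + x) (c 0 • u + x) = c 0 ^ 2 * B u u + B x x := by
    simp only [map_add, map_smul, LinearMap.add_apply, LinearMap.smul_apply, smul_eq_mul, hxu,
      hB.eq u x]
    ring
  rw [hcomb, hsplit]
  by_cases htail : Fin.tail c = 0
  · have hc0 : c 0 ≠ 0 := fun h0 => hc (funext (Fin.cases h0 (congrFun htail)))
    have hx0 : x = 0 := by rw [hx, htail, map_zero]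
    rw [hx0, map_zero, add_zero]
    positivity
  · have hxx : 0 < B x x := (posDef_crossGram_self_iff hB).1 hw.1 _ htail
    positivity

lemma isMaxPositive_of_forall_orthogonal (hB : B.IsSymm) {k : ℕ} {w : Fin k → V}
    (hw : (crossGram B w w).PosDef) (horth : ∀ u, (∀ i, B (w i) u = 0) → B u u ≤ 0) :
    IsMaxPositive B w := by
  refine ⟨hw, fun w' hw' => ?_⟩
  let pairing : (Fin (k + 1) → ℝ) →ₗ[ℝ] Fin k → ℝ :=
    LinearMap.pi fun i => B (w i) ∘ₗ Fintype.linearCombination ℝ w'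
  obtain ⟨c, hc, hc0⟩ := Submodule.exists_mem_ne_zero_of_ne_bot
    (pairing.ker_ne_bot_of_finrank_lt (by simp))
  exact ((posDef_crossGram_self_iff hB).1 hw' c hc0).not_ge (horth _ (congrFun hc))

lemma IsMaxPositive.det_crossGram_ne_zero (hB : B.IsSymm) {k : ℕ} {w w' : Fin k → V}
    (hw : IsMaxPositive B w) (hw' : (crossGram B w' w').PosDef) :
    (crossGram B w w').det ≠ 0 := by
  intro hdet
  obtain ⟨c, hc, hc0⟩ := exists_mulVec_eq_zero_iff.mpr hdet
  refine ((posDef_crossGram_self_iff hB).1 hw' c hc).not_ge (hw.apply_self_nonpos hB fun i => ?_)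
  rw [← crossGram_mulVec_apply, hc0, Pi.zero_apply]

lemma IsMaxPositive.det_crossGram_pos_of_path (hB : B.IsSymm) {k : ℕ} {w : Fin k → V}
    (hw : IsMaxPositive B w) (γ : ℝ → Fin k → V)
    (hγ : ∀ t ∈ Set.Icc (0 : ℝ) 1, (crossGram B (γ t) (γ t)).PosDef)
    (hcont : ∀ i j, Continuous fun t => B (w i) (γ t j))
    (h0 : 0 < (crossGram B w (γ 0)).det) : 0 < (crossGram B w (γ 1)).det := by
  by_contra! h1
  have hdet : Continuous fun t => (crossGram B w (γ t)).det :=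
    (continuous_matrix hcont).matrix_det
  obtain ⟨t, ht, hzero⟩ :=
    intermediate_value_Icc' (zero_le_one' ℝ) hdet.continuousOn ⟨h1, h0.le⟩
  exact hw.det_crossGram_ne_zero hB (hγ t ht) hzero

lemma posDef_crossGram_add_smul (hB : B.IsSymm) {k : ℕ} {w : Fin k → V}
    (hw : IsMaxPositive B w) {P ν : Fin k → V} (hwν : ∀ i j, B (w i) (ν j) = 0)
    (hPν : ∀ i j, B (P i) (ν j) = 0) (hpos : (crossGram B (P + ν) (P + ν)).PosDef)
    {t : ℝ} (ht : t ∈ Set.Icc (0 : ℝ) 1) :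
    (crossGram B (P + t • ν) (P + t • ν)).PosDef := by
  rw [posDef_crossGram_self_iff hB] at hpos ⊢
  intro c hc
  set x := Fintype.linearCombination ℝ P c with hx
  set y := Fintype.linearCombination ℝ ν c with hy
  have hadd (s : ℝ) : Fintype.linearCombination ℝ (P + s • ν) c = x + s • y := by
    simp [hx, hy, Fintype.linearCombination_apply, Finset.sum_add_distrib, Finset.smul_sum,
      smul_comm s]
  have hwy (i : Fin k) : B (w i) y = 0 := by simp [hy, Fintype.linearCombination_apply, hwν]
  have hxy : B x y = 0 := by simp [hx, hy, Fintype.linearCombination_apply, hPν]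
  have hsq (s : ℝ) : B (x + s • y) (x + s • y) = B x x + s ^ 2 * B y y := by
    simp only [map_add, map_smul, LinearMap.add_apply, LinearMap.smul_apply, smul_eq_mul, hxy,
      hB.eq y x]
    ring
  have hyy : B y y ≤ 0 := hw.apply_self_nonpos hB hwy
  have hone := hpos c hc
  rw [← one_smul ℝ ν, hadd, hsq] at hone
  rw [hadd, hsq]
  nlinarith [pow_le_one₀ ht.1 ht.2 (n := 2)]

lemma IsMaxPositive.det_crossGram_pos_trans (hB : B.IsSymm) {k : ℕ} {w₁ w₂ w₃ : Fin k → V}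
    (hw₁ : IsMaxPositive B w₁) (hw₂ : IsMaxPositive B w₂) (hw₃ : (crossGram B w₃ w₃).PosDef)
    (h₁₂ : 0 < (crossGram B w₁ w₂).det) (h₂₃ : 0 < (crossGram B w₂ w₃).det) :
    0 < (crossGram B w₁ w₃).det := by
  obtain ⟨C, hC⟩ := exists_orthogonal_sub_linearCombination hw₂.1 w₃
  set P : Fin k → V := fun j => Fintype.linearCombination ℝ w₂ (C.col j) with hP
  have hP_orth (i j : Fin k) : B (P i) (w₃ j - P j) = 0 := by
    simp only [hP, Fintype.linearCombination_apply ℝ w₂ (C.col i), map_sum, map_smul,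
      LinearMap.sum_apply, LinearMap.smul_apply, hC, smul_zero, Finset.sum_const_zero]
  have hw₂₃ : crossGram B w₂ w₃ = crossGram B w₂ w₂ * C := by
    rw [← crossGram_linearCombination]
    ext i j
    exact sub_eq_zero.1 ((map_sub (B (w₂ i)) _ _).symm.trans (hC i j))
  have hdetC : 0 < C.det := by
    rw [hw₂₃, det_mul] at h₂₃
    exact (pos_iff_pos_of_mul_pos h₂₃).1 hw₂.1.det_pos
  -- Deform `w₃` to its projection `P` onto the span of `w₂` by shrinking the orthogonal part.
  have hpath := hw₁.det_crossGram_pos_of_path hB (fun t => P + t • (w₃ - P))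
    (fun t ht => posDef_crossGram_add_smul (ν := w₃ - P) hB hw₂ hC hP_orth
      (by simpa using hw₃) ht)
    (fun i j => by
      simp only [Pi.add_apply, Pi.smul_apply, map_add, map_smul, smul_eq_mul]
      fun_prop)
    (by
      rw [zero_smul, add_zero, hP, crossGram_linearCombination, det_mul]
      exact mul_pos h₁₂ hdetC)
  simpa using hpath

lemma preservesOrientation_id (B : LinearMap.BilinForm ℝ V) :
    PreservesOrientation B LinearMap.id :=
  fun _ _ hw => by simpa using hw.1.det_pos

namespace PreservesOrientation

variable {φ ψ : V →ₗ[ℝ] V}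

lemma comp (hB : B.IsSymm) (hφ : PreservesOrientation B φ)
    (hφB : ∀ x y, B (φ x) (φ y) = B x y) (hψ : PreservesOrientation B ψ)
    (hψB : ∀ x y, B (ψ x) (ψ y) = B x y) : PreservesOrientation B (φ ∘ₗ ψ) := fun k w hw =>
  hw.det_crossGram_pos_trans hB (hw.comp hψB) ((hw.comp hψB).comp hφB).1
    (hψ k w hw) (hφ k _ (hw.comp hψB))

lemma of_comp_eq_id (hB : B.IsSymm) (hφ : PreservesOrientation B φ)
    (hψB : ∀ x y, B (ψ x) (ψ y) = B x y) (hid : φ ∘ₗ ψ = LinearMap.id) :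
    PreservesOrientation B ψ := by
  intro k w hw
  have hpos := hφ k _ (hw.comp hψB)
  rw [← Function.comp_assoc, ← LinearMap.coe_comp, hid, LinearMap.id_coe, Function.id_comp] at hpos
  rwa [← det_transpose, transpose_crossGram hB]

lemma of_path (hB : B.IsSymm) (Φ : ℝ → V →ₗ[ℝ] V)
    (hΦB : ∀ t x y, B (Φ t x) (Φ t y) = B x y) (hcont : ∀ x y, Continuous fun t => B x (Φ t y))
    (h0 : Φ 0 = LinearMap.id) : PreservesOrientation B (Φ 1) := fun k w hw =>
  hw.det_crossGram_pos_of_path hB (fun t => Φ t ∘ w) (fun t _ => (hw.comp (hΦB t)).1)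
    (fun _ _ => hcont _ _) (by simpa [h0] using hw.1.det_pos)

end PreservesOrientation

end Orientation

section Lattice

variable {ι : Type*} [Fintype ι]

lemma dotProduct_mulVec_mulVec_of_transpose_mul_mul_eq {R : Type*} [CommRing R]
    {M g : Matrix ι ι R} (hg : gᵀ * M * g = M) (x y : ι → R) :
    (g *ᵥ x) ⬝ᵥ M *ᵥ (g *ᵥ y) = x ⬝ᵥ M *ᵥ y := by
  conv_rhs => rw [← hg, ← mulVec_mulVec, ← mulVec_mulVec, dotProduct_mulVec x, vecMul_transpose]

lemma IsIsometry.mul {M g h : Matrix ι ι ℤ} (hg : IsIsometry M g) (hh : IsIsometry M h) :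
    IsIsometry M (g * h) := by
  calc (g * h)ᵀ * M * (g * h) = hᵀ * (gᵀ * M * g) * h := by
        simp only [transpose_mul, Matrix.mul_assoc]
    _ = M := by rw [hg, hh]

variable [DecidableEq ι]

lemma IsIsometry.of_mul_eq_one {M g h : Matrix ι ι ℤ} (hg : IsIsometry M g) (hgh : g * h = 1) :
    IsIsometry M h := by
  calc hᵀ * M * h = hᵀ * (gᵀ * M * g) * h := by rw [hg]
    _ = (g * h)ᵀ * M * (g * h) := by simp only [transpose_mul, Matrix.mul_assoc]
    _ = M := by simp [hgh]

/-- The ℝ-bilinear extension of the integral form with Gram matrix `M`, as a bundled form. -/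
noncomputable def realForm (M : Matrix ι ι ℤ) : LinearMap.BilinForm ℝ (ι → ℝ) :=
  toBilin' (M.map (Int.cast : ℤ → ℝ))

/-- The ℝ-linear extension of the endomorphism `g` of `ℤ^ι`. -/
noncomputable def realMap (g : Matrix ι ι ℤ) : (ι → ℝ) →ₗ[ℝ] ι → ℝ :=
  toLin' (g.map (Int.cast : ℤ → ℝ))

lemma realForm_apply (M : Matrix ι ι ℤ) (x y : ι → ℝ) :
    realForm M x y = x ⬝ᵥ M.map (Int.cast : ℤ → ℝ) *ᵥ y :=
  toBilin'_apply' _ _ _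

lemma isSymm_realForm {M : Matrix ι ι ℤ} (hM : M.IsSymm) : (realForm M).IsSymm :=
  isSymm_toBilin'_iff_isSymm.2 (hM.map _)

lemma realMap_one : realMap (1 : Matrix ι ι ℤ) = LinearMap.id := by
  simp [realMap]

lemma realMap_mul (g h : Matrix ι ι ℤ) : realMap (g * h) = realMap g ∘ₗ realMap h := by
  rw [realMap, show (g * h).map (Int.cast : ℤ → ℝ) = _ from
    Matrix.map_mul (f := Int.castRingHom ℝ), toLin'_mul]
  rfl

lemma realMap_intCast (g : Matrix ι ι ℤ) (x : ι → ℤ) :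
    realMap g (fun i => (x i : ℝ)) = fun i => ((g *ᵥ x) i : ℝ) := by
  ext i
  exact ((Int.castRingHom ℝ).map_mulVec g x i).symm

lemma IsIsometry.realForm_realMap {M g : Matrix ι ι ℤ} (hg : IsIsometry M g) (x y : ι → ℝ) :
    realForm M (realMap g x) (realMap g y) = realForm M x y := by
  simp only [realForm_apply, realMap, toLin'_apply]
  refine dotProduct_mulVec_mulVec_of_transpose_mul_mul_eq ?_ x y
  have hmap := congrArg (fun N => N.map (Int.castRingHom ℝ)) hg
  rw [Matrix.map_mul, Matrix.map_mul] at hmap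
  exact hmap

lemma isMaxPosTuple_iff {M : Matrix ι ι ℤ} {k : ℕ} {w : Fin k → ι → ℝ} :
    IsMaxPosTuple M w ↔ IsMaxPositive (realForm M) w := by
  simp only [IsMaxPosTuple, IsMaxPositive, crossGram, realForm_apply, bilinR]

lemma orientPres_iff {M g : Matrix ι ι ℤ} :
    OrientPres M g ↔ PreservesOrientation (realForm M) (realMap g) := by
  simp only [OrientPres, PreservesOrientation, isMaxPosTuple_iff, crossGram, realForm_apply,
    bilinR, realMap, Function.comp_apply, toLin'_apply]

/-- The group `SO⁺` of the lattice with symmetric Gram matrix `M`. -/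
def specialOrthogonalPlus (M : Matrix ι ι ℤ) (hM : M.IsSymm) :
    Subgroup (Matrix ι ι ℤ)ˣ where
  carrier := {g | IsIsometry M (g : Matrix ι ι ℤ) ∧ (g : Matrix ι ι ℤ).det = 1 ∧
    OrientPres M (g : Matrix ι ι ℤ)}
  one_mem' := by
    refine ⟨by simp [IsIsometry], by simp, orientPres_iff.2 ?_⟩
    rw [Units.val_one, realMap_one]
    exact preservesOrientation_id _
  mul_mem' := by
    rintro g h ⟨hg, hgdet, hgor⟩ ⟨hh, hhdet, hhor⟩
    refine ⟨hg.mul hh, by simp [hgdet, hhdet], orientPres_iff.2 ?_⟩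
    rw [Units.val_mul, realMap_mul]
    exact (orientPres_iff.1 hgor).comp (isSymm_realForm hM) hg.realForm_realMap
      (orientPres_iff.1 hhor) hh.realForm_realMap
  inv_mem' := by
    rintro g ⟨hg, hgdet, hgor⟩
    have hinv := hg.of_mul_eq_one g.mul_inv
    refine ⟨hinv, ?_, orientPres_iff.2 ((orientPres_iff.1 hgor).of_comp_eq_id
      (isSymm_realForm hM) hinv.realForm_realMap ?_)⟩
    · simp [coe_units_inv, hgdet]
    · rw [← realMap_mul, g.mul_inv, realMap_one]

/-- The subgroup of `GL(R^ι)` fixing the vector `v`. -/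
def vecStabilizer {R : Type*} [CommRing R] (v : ι → R) : Subgroup (Matrix ι ι R)ˣ where
  carrier := {g | (g : Matrix ι ι R) *ᵥ v = v}
  one_mem' := one_mulVec v
  mul_mem' {g h} hg hh := by
    rw [Set.mem_ofPred_eq] at hg hh ⊢
    rw [Units.val_mul, ← mulVec_mulVec, hh, hg]
  inv_mem' {g} hg := by
    rw [Set.mem_ofPred_eq] at hg ⊢
    conv_lhs => rw [← hg]
    simp

lemma mem_vecStabilizer {R : Type*} [CommRing R] {v : ι → R} {g : (Matrix ι ι R)ˣ} :
    g ∈ vecStabilizer v ↔ (g : Matrix ι ι R) *ᵥ v = v :=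
  Iff.rfl

/-- The subgroup of `GL(R^ι)` fixing the standard basis vectors indexed by `S`. -/
def basisFixator (R : Type*) [CommRing R] (S : Set ι) : Subgroup (Matrix ι ι R)ˣ :=
  ⨅ s ∈ S, vecStabilizer (Pi.single s 1)

lemma mem_basisFixator {R : Type*} [CommRing R] {S : Set ι} {g : (Matrix ι ι R)ˣ} :
    g ∈ basisFixator R S ↔
      ∀ s ∈ S, (g : Matrix ι ι R) *ᵥ Pi.single s 1 = Pi.single s 1 := by
  simp only [basisFixator, Subgroup.mem_iInf, mem_vecStabilizer]

lemma basisFixator_univ (R : Type*) [CommRing R] :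
    basisFixator R (Set.univ : Set ι) = ⊥ := by
  refine (Subgroup.eq_bot_iff_forall _).2 fun g hg => Units.ext (ext_of_mulVec_single fun s => ?_)
  rw [mem_basisFixator.1 hg s trivial, Units.val_one, one_mulVec]

lemma mul_mem_basisFixator_insert {R : Type*} [CommRing R] {S : Set ι}
    {g h : (Matrix ι ι R)ˣ} (hg : g ∈ basisFixator R S)
    (hh : h ∈ basisFixator R S) {p : ι}
    (hp : (h : Matrix ι ι R) *ᵥ ((g : Matrix ι ι R) *ᵥ Pi.single p 1) = Pi.single p 1) :
    h * g ∈ basisFixator R (insert p S) := by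
  refine mem_basisFixator.2 fun s hs => ?_
  rcases Set.mem_insert_iff.1 hs with rfl | hs
  · rwa [Units.val_mul, ← mulVec_mulVec]
  · exact mem_basisFixator.1 (mul_mem hh hg) s hs

lemma exists_mem_forall_natAbs_mulVec_le {x : ι → ℤ} (hx : x ≠ 0) (H : Subgroup (Matrix ι ι ℤ)ˣ) :
    ∃ g ∈ H, ∃ i, ((g : Matrix ι ι ℤ) *ᵥ x) i ≠ 0 ∧ ∀ h ∈ H, ∀ j,
      ((h : Matrix ι ι ℤ) *ᵥ ((g : Matrix ι ι ℤ) *ᵥ x)) j ≠ 0 →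
        (((g : Matrix ι ι ℤ) *ᵥ x) i).natAbs ≤
          (((h : Matrix ι ι ℤ) *ᵥ ((g : Matrix ι ι ℤ) *ᵥ x)) j).natAbs := by
  obtain ⟨i, hi⟩ := Function.ne_iff.1 hx
  obtain ⟨⟨g, i⟩, ⟨hg, hgi⟩, hmin⟩ := WellFounded.has_min
    (measure fun q : (Matrix ι ι ℤ)ˣ × ι => (((q.1 : Matrix ι ι ℤ) *ᵥ x) q.2).natAbs).wf
    {q | q.1 ∈ H ∧ ((q.1 : Matrix ι ι ℤ) *ᵥ x) q.2 ≠ 0}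
    ⟨(1, i), one_mem H, by simpa using hi⟩
  refine ⟨g, hg, i, hgi, fun h hh j hj => ?_⟩
  rw [mulVec_mulVec, ← Units.val_mul] at hj ⊢
  exact not_lt.1 (hmin (h * g, j) ⟨mul_mem hh hg, hj⟩)

end Lattice

section Eichler

variable {ι R : Type*} [Fintype ι] [CommRing R]

/-- The vectors `a` and `b` span a totally isotropic submodule for the symmetric form with Gram
matrix `M`. -/
structure IsIsotropicPair (M : Matrix ι ι R) (a b : ι → R) : Prop where
  left : a ⬝ᵥ M *ᵥ a = 0
  right : b ⬝ᵥ M *ᵥ b = 0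
  orthogonal : a ⬝ᵥ M *ᵥ b = 0

namespace IsIsotropicPair

variable {M : Matrix ι ι R} {a b : ι → R}

lemma smul_left (h : IsIsotropicPair M a b) (c : R) : IsIsotropicPair M (c • a) b :=
  ⟨by simp [mulVec_smul, h.left], h.right, by simp [h.orthogonal]⟩

lemma orthogonal_symm (h : IsIsotropicPair M a b) (hM : M.IsSymm) : b ⬝ᵥ M *ᵥ a = 0 := by
  rw [dotProduct_mulVec, ← mulVec_transpose, hM.eq, dotProduct_comm, h.orthogonal]

lemma map {S : Type*} [CommRing S] (h : IsIsotropicPair M a b) (f : R →+* S) :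
    IsIsotropicPair (M.map f) (f ∘ a) (f ∘ b) := by
  have hmap (x y : ι → R) : (f ∘ x) ⬝ᵥ M.map f *ᵥ (f ∘ y) = f (x ⬝ᵥ M *ᵥ y) := by
    rw [f.map_dotProduct, ← funext (f.map_mulVec M y)]
    rfl
  exact ⟨by rw [hmap, h.left, map_zero], by rw [hmap, h.right, map_zero],
    by rw [hmap, h.orthogonal, map_zero]⟩

end IsIsotropicPair

variable [DecidableEq ι]

lemma det_one_add_vecMulVec (u v : ι → R) : (1 + vecMulVec u v).det = 1 + v ⬝ᵥ u := by
  rw [vecMulVec_eq Unit, det_one_add_replicateCol_mul_replicateRow]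

/-- The Eichler transvection `x ↦ x + (x, b) a - (x, a) b`, an isometry if `a` and `b` form an
isotropic pair. -/
def eichler (M : Matrix ι ι R) (a b : ι → R) : Matrix ι ι R :=
  1 + vecMulVec a (M *ᵥ b) - vecMulVec b (M *ᵥ a)

lemma eichler_mulVec (M : Matrix ι ι R) (a b x : ι → R) :
    eichler M a b *ᵥ x = x + (x ⬝ᵥ M *ᵥ b) • a - (x ⬝ᵥ M *ᵥ a) • b := by
  simp [eichler, add_mulVec, sub_mulVec, vecMulVec_mulVec, dotProduct_comm x]

lemma eichler_zero_left (M : Matrix ι ι R) (b : ι → R) : eichler M 0 b = 1 := by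
  simp [eichler]

lemma eichler_map {S : Type*} [CommRing S] (f : R →+* S) (M : Matrix ι ι R) (a b : ι → R) :
    (eichler M a b).map f = eichler (M.map f) (f ∘ a) (f ∘ b) := by
  ext i j
  simp [eichler, vecMulVec_apply, f.map_mulVec, one_apply, apply_ite f]

namespace IsIsotropicPair

variable {M : Matrix ι ι R} {a b : ι → R}

lemma det_eichler (hM : M.IsSymm) (h : IsIsotropicPair M a b) : (eichler M a b).det = 1 := by
  have hfactor : eichler M a b =
      (1 + vecMulVec a (M *ᵥ b)) * (1 + vecMulVec b (-(M *ᵥ a))) := by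
    simp [eichler, add_mul, mul_add, vecMulVec_mul_vecMulVec, dotProduct_comm _ b, h.right,
      sub_eq_add_neg, add_comm]
  rw [hfactor, det_mul, det_one_add_vecMulVec, det_one_add_vecMulVec, dotProduct_comm,
    h.orthogonal, neg_dotProduct, dotProduct_comm, h.orthogonal_symm hM]
  simp

lemma transpose_eichler_mul_mul_eichler (hM : M.IsSymm) (h : IsIsotropicPair M a b) :
    (eichler M a b)ᵀ * M * eichler M a b = M := by
  have hvec (x : ι → R) : x ᵥ* M = M *ᵥ x := by rw [← mulVec_transpose, hM.eq]
  simp only [eichler, transpose_add, transpose_sub, transpose_one, transpose_vecMulVec, add_mul,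
    sub_mul, mul_add, mul_sub, one_mul, mul_one, vecMulVec_mul, mul_vecMulVec, hvec,
    vecMulVec_mulVec]
  simp [h.left, h.right, h.orthogonal, h.orthogonal_symm hM, dotProduct_comm]

lemma eichler_smul_mul_eichler_smul (hM : M.IsSymm) (h : IsIsotropicPair M a b) (s t : R) :
    eichler M (s • a) b * eichler M (t • a) b = eichler M ((s + t) • a) b := by
  have hvanish : (M *ᵥ b) ⬝ᵥ a = 0 ∧ (M *ᵥ b) ⬝ᵥ b = 0 ∧ (M *ᵥ a) ⬝ᵥ a = 0 ∧
      (M *ᵥ a) ⬝ᵥ b = 0 := by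
    simp [dotProduct_comm _ a, dotProduct_comm _ b, h.left, h.right, h.orthogonal,
      h.orthogonal_symm hM]
  simp only [eichler, add_mul, mul_add, sub_mul, mul_sub, one_mul, mul_one, mulVec_smul,
    mulVec_add, add_smul, add_vecMulVec, vecMulVec_add, smul_vecMulVec, vecMulVec_smul,
    smul_mul, Matrix.mul_smul, vecMulVec_mul_vecMulVec, hvanish, zero_smul]
  abel

/-- The Eichler transvection of an isotropic pair as a unit. -/
def eichlerUnit (h : IsIsotropicPair M a b) (hM : M.IsSymm) : (Matrix ι ι R)ˣ where
  val := eichler M a b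
  inv := eichler M (-a) b
  val_inv := by
    simpa [eichler_zero_left] using h.eichler_smul_mul_eichler_smul hM 1 (-1)
  inv_val := by
    simpa [eichler_zero_left] using h.eichler_smul_mul_eichler_smul hM (-1) 1

end IsIsotropicPair

lemma IsIsotropicPair.orientPres_eichler {M : Matrix ι ι ℤ} {a b : ι → ℤ} (hM : M.IsSymm)
    (h : IsIsotropicPair M a b) : OrientPres M (eichler M a b) := by
  let f := Int.castRingHom ℝ
  have hpair (t : ℝ) : IsIsotropicPair (M.map f) (t • (f ∘ a)) (f ∘ b) := (h.map f).smul_left t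
  have hpath := PreservesOrientation.of_path (isSymm_realForm hM)
    (fun t => toLin' (eichler (M.map f) (t • (f ∘ a)) (f ∘ b)))
    (fun t x y => by
      simp only [realForm_apply, toLin'_apply]
      exact dotProduct_mulVec_mulVec_of_transpose_mul_mul_eq
        ((hpair t).transpose_eichler_mul_mul_eichler (hM.map f)) x y)
    (fun x y => by
      simp only [realForm_apply, toLin'_apply, eichler_mulVec, mulVec_smul, mulVec_add, mulVec_sub,
        dotProduct_add, dotProduct_sub, dotProduct_smul, smul_eq_mul]
      fun_prop)
    (by simp [eichler_zero_left])
  rw [orientPres_iff]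
  rw [one_smul, ← eichler_map] at hpath
  exact hpath

lemma IsIsotropicPair.eichlerUnit_mem_specialOrthogonalPlus {M : Matrix ι ι ℤ} {a b : ι → ℤ}
    (h : IsIsotropicPair M a b) (hM : M.IsSymm) :
    h.eichlerUnit hM ∈ specialOrthogonalPlus M hM :=
  ⟨h.transpose_eichler_mul_mul_eichler hM, h.det_eichler hM, h.orientPres_eichler hM⟩

end Eichler

/-! ### Orthogonal sums of hyperbolic planes -/

/-- A fixed-point-free involution of the index set `ι`. It encodes a standard basis of an
orthogonal sum of hyperbolic planes: the basis vectors `e i` and `e (swap i)` span one of the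
planes. -/
structure HyperbolicPairing (ι : Type*) where
  swap : ι → ι
  swap_swap : ∀ i, swap (swap i) = i
  swap_ne : ∀ i, swap i ≠ i

namespace HyperbolicPairing

variable {ι : Type*} (σ : HyperbolicPairing ι)

lemma swap_eq_iff {i j : ι} : σ.swap i = j ↔ i = σ.swap j :=
  ⟨fun h => by rw [← h, σ.swap_swap], fun h => by rw [h, σ.swap_swap]⟩

lemma swap_inj {i j : ι} : σ.swap i = σ.swap j ↔ i = j := by
  rw [swap_eq_iff, swap_swap]

variable [DecidableEq ι]

/-- The Gram matrix of the standard basis. -/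
def gram (R : Type*) [Zero R] [One R] : Matrix ι ι R :=
  of fun i j => if σ.swap i = j then 1 else 0

lemma isSymm_gram (R : Type*) [Zero R] [One R] : (σ.gram R).IsSymm := by
  ext i j
  simp only [gram, transpose_apply, of_apply, σ.swap_eq_iff (i := j), eq_comm (a := j)]

variable {R : Type*} [CommRing R]

/-- The vector `x e_p + y e_{σ p}` of the hyperbolic plane spanned by `e_p` and `e_{σ p}`. -/
def planeVec (p : ι) (x y : R) : ι → R :=
  Pi.single p x + Pi.single (σ.swap p) y

lemma planeVec_swap (p : ι) (x y : R) : σ.planeVec (σ.swap p) x y = σ.planeVec p y x := by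
  rw [planeVec, planeVec, swap_swap, add_comm]

lemma planeVec_apply_self (p : ι) (x y : R) : σ.planeVec p x y p = x := by
  simp [planeVec, (σ.swap_ne p).symm]

lemma planeVec_apply_swap (p : ι) (x y : R) : σ.planeVec p x y (σ.swap p) = y := by
  simp [planeVec, σ.swap_ne p]

lemma planeVec_apply_of_ne {p i : ι} (hp : i ≠ p) (hσ : i ≠ σ.swap p) (x y : R) :
    σ.planeVec p x y i = 0 := by
  simp [planeVec, hp, hσ]

lemma eq_planeVec {p : ι} {x : ι → R} (hx : ∀ i, i ≠ p → i ≠ σ.swap p → x i = 0) :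
    x = σ.planeVec p (x p) (x (σ.swap p)) := by
  ext i
  by_cases hp : i = p
  · rw [hp, planeVec_apply_self]
  by_cases hσ : i = σ.swap p
  · rw [hσ, planeVec_apply_swap]
  · rw [hx i hp hσ, planeVec_apply_of_ne σ hp hσ]

variable [Fintype ι]

lemma gram_mulVec_apply (x : ι → R) (i : ι) : (σ.gram R *ᵥ x) i = x (σ.swap i) := by
  simp [gram, mulVec, dotProduct]

lemma dotProduct_gram_mulVec_single (x : ι → R) (i : ι) (c : R) :
    x ⬝ᵥ σ.gram R *ᵥ Pi.single i c = x (σ.swap i) * c := by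
  simp only [dotProduct, gram_mulVec_apply, Pi.single_apply, σ.swap_eq_iff, mul_ite, mul_zero,
    Finset.sum_ite_eq', Finset.mem_univ, if_true]

lemma single_dotProduct_gram_mulVec_single_self (i : ι) (c : R) :
    Pi.single i c ⬝ᵥ σ.gram R *ᵥ Pi.single i c = 0 := by
  rw [dotProduct_gram_mulVec_single, Pi.single_eq_of_ne (σ.swap_ne i), zero_mul]

lemma isIsotropicPair_single {i j : ι} (hij : i ≠ j) :
    IsIsotropicPair (σ.gram R) (Pi.single i 1) (Pi.single (σ.swap j) 1) := by
  refine ⟨σ.single_dotProduct_gram_mulVec_single_self i 1,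
    σ.single_dotProduct_gram_mulVec_single_self (σ.swap j) 1, ?_⟩
  rw [dotProduct_gram_mulVec_single, swap_swap, Pi.single_eq_of_ne hij.symm, zero_mul]

lemma dotProduct_gram_mulVec_planeVec (x : ι → R) (p : ι) (a b : R) :
    x ⬝ᵥ σ.gram R *ᵥ σ.planeVec p a b = x (σ.swap p) * a + x p * b := by
  rw [planeVec, mulVec_add, dotProduct_add, dotProduct_gram_mulVec_single,
    dotProduct_gram_mulVec_single, swap_swap]

/-- The elementary transvection `x_i += n x_j`, `x_{σ j} -= n x_{σ i}` of the orthogonal sum of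
hyperbolic planes. -/
def transvection {i j : ι} (hij : i ≠ j) (n : ℤ) : (Matrix ι ι ℤ)ˣ :=
  ((σ.isIsotropicPair_single hij).smul_left n).eichlerUnit (σ.isSymm_gram ℤ)

lemma transvection_mulVec {i j : ι} (hij : i ≠ j) (n : ℤ) (x : ι → ℤ) :
    (σ.transvection hij n : Matrix ι ι ℤ) *ᵥ x =
      x + Pi.single i (n * x j) - Pi.single (σ.swap j) (n * x (σ.swap i)) := by
  refine (eichler_mulVec _ _ _ x).trans ?_
  simp only [← Pi.single_smul, dotProduct_gram_mulVec_single, swap_swap, mul_one, smul_eq_mul]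
  simp only [mul_comm n]

lemma transvection_mulVec_single_of_ne {i j s : ι} (hij : i ≠ j) (n : ℤ) (hj : s ≠ j)
    (hi : s ≠ σ.swap i) :
    (σ.transvection hij n : Matrix ι ι ℤ) *ᵥ Pi.single s 1 = Pi.single s 1 := by
  rw [transvection_mulVec]
  simp [hj.symm, hi.symm]

lemma transvection_add {i j : ι} (hij : i ≠ j) (m n : ℤ) :
    σ.transvection hij (m + n) = σ.transvection hij m * σ.transvection hij n :=
  Units.ext ((σ.isIsotropicPair_single hij).eichler_smul_mul_eichler_smul
    (σ.isSymm_gram ℤ) m n).symm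

lemma transvection_swap_swap {i j : ι} (hij : i ≠ j) (n : ℤ) :
    σ.transvection (mt σ.swap_inj.1 hij.symm) (-n) = σ.transvection hij n := by
  refine Units.ext (mulVec_injective (funext fun x => ?_))
  simp only [transvection_mulVec, swap_swap, neg_mul, Pi.single_neg]
  abel

lemma transvection_eq_one {i j : ι} (hij : i ≠ j) (h : i = σ.swap j) (n : ℤ) :
    σ.transvection hij n = 1 := by
  refine Units.ext (mulVec_injective (funext fun x => ?_))
  subst h
  simp [transvection_mulVec, swap_swap]

/-- The group `SO⁺` of the orthogonal sum of hyperbolic planes. -/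
abbrev soPlus : Subgroup (Matrix ι ι ℤ)ˣ :=
  specialOrthogonalPlus (σ.gram ℤ) (σ.isSymm_gram ℤ)

lemma transvection_mem_soPlus {i j : ι} (hij : i ≠ j) (n : ℤ) :
    σ.transvection hij n ∈ σ.soPlus :=
  IsIsotropicPair.eichlerUnit_mem_specialOrthogonalPlus _ _

/-- The group generated by the elementary transvections. -/
def elementary : Subgroup (Matrix ι ι ℤ)ˣ :=
  Subgroup.closure {g | ∃ (i j : ι) (hij : i ≠ j) (n : ℤ), g = σ.transvection hij n}

lemma transvection_mem_elementary {i j : ι} (hij : i ≠ j) (n : ℤ) :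
    σ.transvection hij n ∈ σ.elementary :=
  Subgroup.subset_closure ⟨i, j, hij, n, rfl⟩

lemma elementary_le_soPlus : σ.elementary ≤ σ.soPlus := by
  rw [elementary, Subgroup.closure_le]
  rintro _ ⟨i, j, hij, n, rfl⟩
  exact σ.transvection_mem_soPlus hij n

end HyperbolicPairing

/-! ### Reduction by transvections -/

namespace HyperbolicPairing

variable {ι : Type*} [Fintype ι] [DecidableEq ι] (σ : HyperbolicPairing ι) {S : Set ι}

lemma dotProduct_gram_mulVec_mulVec {g : (Matrix ι ι ℤ)ˣ} (hg : g ∈ σ.soPlus) (x y : ι → ℤ) :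
    ((g : Matrix ι ι ℤ) *ᵥ x) ⬝ᵥ σ.gram ℤ *ᵥ ((g : Matrix ι ι ℤ) *ᵥ y) =
      x ⬝ᵥ σ.gram ℤ *ᵥ y :=
  dotProduct_mulVec_mulVec_of_transpose_mul_mul_eq hg.1 x y

lemma mulVec_apply_swap_of_mulVec_single {g : (Matrix ι ι ℤ)ˣ} (hg : g ∈ σ.soPlus) {s : ι}
    (hs : (g : Matrix ι ι ℤ) *ᵥ Pi.single s 1 = Pi.single s 1) (x : ι → ℤ) :
    ((g : Matrix ι ι ℤ) *ᵥ x) (σ.swap s) = x (σ.swap s) := by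
  have h := σ.dotProduct_gram_mulVec_mulVec hg x (Pi.single s 1)
  rwa [hs, dotProduct_gram_mulVec_single, dotProduct_gram_mulVec_single, mul_one, mul_one] at h

lemma transvection_mem_basisFixator {i j : ι} (hij : i ≠ j) (hi : σ.swap i ∉ S) (hj : j ∉ S)
    (n : ℤ) : σ.transvection hij n ∈ σ.elementary ⊓ basisFixator ℤ S :=
  ⟨σ.transvection_mem_elementary hij n, mem_basisFixator.2 fun _ hs =>
    σ.transvection_mulVec_single_of_ne hij n (ne_of_mem_of_not_mem hs hj)
      (ne_of_mem_of_not_mem hs hi)⟩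

lemma exists_mulVec_apply_eq_ite {i : ι} (hi : i ∉ S) {x : ι → ℤ}
    (hxS : ∀ s ∈ S, s ≠ σ.swap i → x (σ.swap s) = 0) (hdvd : ∀ j ≠ σ.swap i, x i ∣ x j)
    (T : Finset ι) (hT : ∀ j ∈ T, j ≠ i ∧ j ≠ σ.swap i) :
    ∃ h ∈ σ.elementary ⊓ basisFixator ℤ S, ∀ j ≠ σ.swap i,
      ((h : Matrix ι ι ℤ) *ᵥ x) j = if j ∈ T then 0 else x j := by
  induction T using Finset.induction_on with
  | empty => exact ⟨1, one_mem _, by simp⟩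
  | insert a T ha ih =>
    obtain ⟨hai, haσ⟩ := hT a (Finset.mem_insert_self a T)
    obtain ⟨h, hh, hhx⟩ := ih fun j hj => hT j (Finset.mem_insert_of_mem hj)
    have hiT : i ∉ T := fun hiT => (hT i (Finset.mem_insert_of_mem hiT)).1 rfl
    by_cases haS : σ.swap a ∈ S
    · have hxa : x a = 0 := by
        simpa only [swap_swap] using hxS _ haS (mt σ.swap_inj.1 hai)
      refine ⟨h, hh, fun j hj => ?_⟩
      rw [hhx j hj]
      by_cases hja : j = a <;> simp [hja, hxa]
    · obtain ⟨n, hn⟩ := hdvd a haσ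
      refine ⟨_, mul_mem (σ.transvection_mem_basisFixator hai haS hi (-n)) hh, fun j hj => ?_⟩
      rw [Units.val_mul, ← mulVec_mulVec, transvection_mulVec, Pi.sub_apply,
        Pi.single_eq_of_ne hj, sub_zero, Pi.add_apply, hhx j hj, hhx i (σ.swap_ne i).symm,
        if_neg hiT]
      by_cases hja : j = a
      · subst hja
        simp [ha, hn, mul_comm]
      · simp [hja]

lemma eq_single_of_isotropic {i : ι} {x : ι → ℤ} (hxi : x i ≠ 0)
    (hiso : x ⬝ᵥ σ.gram ℤ *ᵥ x = 0) (hx : ∀ j, j ≠ i → j ≠ σ.swap i → x j = 0) :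
    x = Pi.single i (x i) := by
  have hplane := σ.eq_planeVec hx
  have hprod : x (σ.swap i) * x i + x i * x (σ.swap i) = 0 := by
    rw [← σ.dotProduct_gram_mulVec_planeVec, ← hplane, hiso]
  have hzero : x (σ.swap i) = 0 := by
    rw [mul_comm, ← two_mul] at hprod
    simpa [hxi] using hprod
  rwa [hzero, planeVec, Pi.single_zero, add_zero] at hplane

lemma exists_mulVec_eq_single_of_dvd {i : ι} (hi : i ∉ S) {x : ι → ℤ} (hxi : x i ≠ 0)
    (hiso : x ⬝ᵥ σ.gram ℤ *ᵥ x = 0) (hxS : ∀ s ∈ S, s ≠ σ.swap i → x (σ.swap s) = 0)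
    (hdvd : ∀ j ≠ σ.swap i, x i ∣ x j) :
    ∃ h ∈ σ.elementary ⊓ basisFixator ℤ S,
      (h : Matrix ι ι ℤ) *ᵥ x = Pi.single i (x i) := by
  obtain ⟨h, hh, hhx⟩ := σ.exists_mulVec_apply_eq_ite hi hxS hdvd {i, σ.swap i}ᶜ (by simp)
  have hhxi : ((h : Matrix ι ι ℤ) *ᵥ x) i = x i := by
    rw [hhx i (σ.swap_ne i).symm]
    simp
  refine ⟨h, hh, hhxi ▸ σ.eq_single_of_isotropic (hhxi.symm ▸ hxi) ?_ fun j hji hjσ => ?_⟩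
  · rw [σ.dotProduct_gram_mulVec_mulVec (σ.elementary_le_soPlus hh.1), hiso]
  · rw [hhx j hjσ]
    simp [hji, hjσ]

lemma mulVec_apply_eq_zero (hS : ∀ s ∈ S, σ.swap s ∈ S) {g : (Matrix ι ι ℤ)ˣ} (hg : g ∈ σ.soPlus)
    (hgS : g ∈ basisFixator ℤ S) {x : ι → ℤ} (hxS : ∀ s ∈ S, x s = 0) {s : ι} (hs : s ∈ S) :
    ((g : Matrix ι ι ℤ) *ᵥ x) s = 0 := by
  have h := σ.mulVec_apply_swap_of_mulVec_single hg (mem_basisFixator.1 hgS _ (hS s hs)) x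
  rwa [swap_swap, hxS s hs] at h

lemma dvd_of_forall_natAbs_le (hS : ∀ s ∈ S, σ.swap s ∈ S) {y : ι → ℤ} (hyS : ∀ s ∈ S, y s = 0)
    {i : ι} (hyi : y i ≠ 0)
    (hmin : ∀ h ∈ σ.elementary ⊓ basisFixator ℤ S, ∀ j, ((h : Matrix ι ι ℤ) *ᵥ y) j ≠ 0 →
      (y i).natAbs ≤ (((h : Matrix ι ι ℤ) *ᵥ y) j).natAbs) {j : ι} (hj : j ≠ σ.swap i) :
    y i ∣ y j := by
  by_cases hji : j = i
  · rw [hji]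
  by_cases hjS : j ∈ S
  · rw [hyS j hjS]
    exact dvd_zero _
  have hi : i ∉ S := mt (hyS i) hyi
  have hσj : σ.swap j ∉ S := fun h => hjS (σ.swap_swap j ▸ hS _ h)
  have hrem : ((σ.transvection hji (-(y j / y i)) : Matrix ι ι ℤ) *ᵥ y) j = y j % y i := by
    simp [transvection_mulVec, hj, Int.emod_def, mul_comm, sub_eq_add_neg]
  rw [Int.dvd_iff_emod_eq_zero]
  by_contra hne
  have hle := hmin _ (σ.transvection_mem_basisFixator hji hσj hi _) j (hrem ▸ hne)
  rw [hrem] at hle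
  have hlt : y j % y i < (y i).natAbs := Int.natCast_natAbs (y i) ▸ Int.emod_lt_abs (y j) hyi
  have hnonneg : 0 ≤ y j % y i := Int.emod_nonneg (y j) hyi
  omega

lemma exists_mulVec_eq_single_isUnit (hS : ∀ s ∈ S, σ.swap s ∈ S) {x z : ι → ℤ}
    (hiso : x ⬝ᵥ σ.gram ℤ *ᵥ x = 0) (hxz : x ⬝ᵥ σ.gram ℤ *ᵥ z = 1) (hxS : ∀ s ∈ S, x s = 0) :
    ∃ h ∈ σ.elementary ⊓ basisFixator ℤ S, ∃ i ∉ S, ∃ ε : ℤ, IsUnit ε ∧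
      (h : Matrix ι ι ℤ) *ᵥ x = Pi.single i ε := by
  have hx : x ≠ 0 := by
    rintro rfl
    simp at hxz
  obtain ⟨g, hg, i, hgi, hmin⟩ :=
    exists_mem_forall_natAbs_mulVec_le hx (σ.elementary ⊓ basisFixator ℤ S)
  have hgso := σ.elementary_le_soPlus hg.1
  set y := (g : Matrix ι ι ℤ) *ᵥ x
  have hyS : ∀ s ∈ S, y s = 0 := fun s hs => σ.mulVec_apply_eq_zero hS hgso hg.2 hxS hs
  have hi : i ∉ S := mt (hyS i) hgi
  obtain ⟨h, hh, hhy⟩ := σ.exists_mulVec_eq_single_of_dvd hi hgi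
    ((σ.dotProduct_gram_mulVec_mulVec hgso x x).trans hiso) (fun s hs _ => hyS _ (hS s hs))
    (fun j hj => σ.dvd_of_forall_natAbs_le hS hyS hgi hmin hj)
  have hhgx : ((h * g : (Matrix ι ι ℤ)ˣ) : Matrix ι ι ℤ) *ᵥ x = Pi.single i (y i) := by
    rw [← hhy, Units.val_mul, ← mulVec_mulVec]
  refine ⟨h * g, mul_mem hh hg, i, hi, y i, ?_, hhgx⟩
  have hone := σ.dotProduct_gram_mulVec_mulVec (σ.elementary_le_soPlus (mul_mem hh hg).1) x z
  rw [hhgx, hxz, single_dotProduct] at hone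
  exact IsUnit.of_mul_eq_one _ hone

lemma exists_mulVec_single_eq_single (hS : ∀ s ∈ S, σ.swap s ∈ S) {i j : ι} (hi : i ∉ S)
    (hj : j ∉ S) (hji : j ≠ i) (hjσ : j ≠ σ.swap i) {ε δ : ℤ} (hε : IsUnit ε) (hδ : IsUnit δ) :
    ∃ h ∈ σ.elementary ⊓ basisFixator ℤ S,
      (h : Matrix ι ι ℤ) *ᵥ Pi.single i ε = Pi.single j δ := by
  have hnotMem {k : ι} (hk : k ∉ S) : σ.swap k ∉ S := fun h => hk (σ.swap_swap k ▸ hS _ h)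
  refine ⟨_, mul_mem (σ.transvection_mem_basisFixator hji.symm (hnotMem hi) hj (-(ε * δ)))
    (σ.transvection_mem_basisFixator hji (hnotMem hj) hi (ε * δ)), ?_⟩
  have hiσ : i ≠ σ.swap j := fun h => hjσ (σ.swap_eq_iff.1 h.symm)
  have hεε : ε * ε = 1 := Int.isUnit_mul_self hε
  have hδδ : δ * δ = 1 := Int.isUnit_mul_self hδ
  have hmove : (σ.transvection hji (ε * δ) : Matrix ι ι ℤ) *ᵥ Pi.single i ε =
      Pi.single i ε + Pi.single j δ := by
    rw [transvection_mulVec]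
    simp [hiσ.symm, mul_right_comm, hεε]
  rw [Units.val_mul, ← mulVec_mulVec, hmove, transvection_mulVec]
  simp only [Pi.add_apply, Pi.single_eq_same, Pi.single_eq_of_ne hji, Pi.single_eq_of_ne hjσ.symm,
    Pi.single_eq_of_ne (σ.swap_ne i), zero_add, mul_zero, Pi.single_zero, sub_zero, neg_mul,
    mul_assoc, hδδ, mul_one, Pi.single_neg]
  abel

lemma exists_mulVec_single_eq_single_of_third (hS : ∀ s ∈ S, σ.swap s ∈ S) {i p r : ι}
    (hi : i ∉ S) (hp : p ∉ S) (hr : r ∉ S) (hrp : r ≠ p) (hrσ : r ≠ σ.swap p) {ε : ℤ}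
    (hε : IsUnit ε) :
    ∃ h ∈ σ.elementary ⊓ basisFixator ℤ S,
      (h : Matrix ι ι ℤ) *ᵥ Pi.single i ε = Pi.single p 1 := by
  have hpr : p ≠ σ.swap r := fun h => hrσ (σ.swap_eq_iff.1 h.symm)
  by_cases hplane : i = p ∨ i = σ.swap p
  · have hri : r ≠ i ∧ r ≠ σ.swap i := by
      rcases hplane with rfl | rfl
      · exact ⟨hrp, hrσ⟩
      · exact ⟨hrσ, by rwa [swap_swap]⟩
    obtain ⟨h₁, hh₁, h₁i⟩ := σ.exists_mulVec_single_eq_single hS hi hr hri.1 hri.2 hε isUnit_one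
    obtain ⟨h₂, hh₂, h₂r⟩ := σ.exists_mulVec_single_eq_single hS hr hp hrp.symm hpr
      isUnit_one isUnit_one
    exact ⟨h₂ * h₁, mul_mem hh₂ hh₁, by rw [Units.val_mul, ← mulVec_mulVec, h₁i, h₂r]⟩
  · push Not at hplane
    exact σ.exists_mulVec_single_eq_single hS hi hp hplane.1.symm
      (fun h => hplane.2 (σ.swap_eq_iff.1 h.symm)) hε isUnit_one

lemma exists_mulVec_mulVec_single_eq (hS : ∀ s ∈ S, σ.swap s ∈ S) {g : (Matrix ι ι ℤ)ˣ}
    (hg : g ∈ σ.soPlus) (hgS : g ∈ basisFixator ℤ S) {p r : ι} (hp : p ∉ S) (hr : r ∉ S)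
    (hrp : r ≠ p) (hrσ : r ≠ σ.swap p) :
    ∃ h ∈ σ.elementary ⊓ basisFixator ℤ S,
      (h : Matrix ι ι ℤ) *ᵥ ((g : Matrix ι ι ℤ) *ᵥ Pi.single p 1) = Pi.single p 1 := by
  have hiso := (σ.dotProduct_gram_mulVec_mulVec hg (Pi.single p 1) (Pi.single p 1)).trans
    (σ.single_dotProduct_gram_mulVec_single_self p 1)
  have hdual : ((g : Matrix ι ι ℤ) *ᵥ Pi.single p 1) ⬝ᵥ σ.gram ℤ *ᵥ
      ((g : Matrix ι ι ℤ) *ᵥ Pi.single (σ.swap p) 1) = 1 := by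
    rw [σ.dotProduct_gram_mulVec_mulVec hg, dotProduct_gram_mulVec_single, swap_swap,
      Pi.single_eq_same, mul_one]
  obtain ⟨h₁, hh₁, i, hi, ε, hε, h₁g⟩ := σ.exists_mulVec_eq_single_isUnit hS hiso hdual
    fun s hs => σ.mulVec_apply_eq_zero hS hg hgS
      (fun t ht => Pi.single_eq_of_ne (ne_of_mem_of_not_mem ht hp) _) hs
  obtain ⟨h₂, hh₂, h₂i⟩ := σ.exists_mulVec_single_eq_single_of_third hS hi hp hr hrp hrσ hε
  exact ⟨h₂ * h₁, mul_mem hh₂ hh₁, by rw [Units.val_mul, ← mulVec_mulVec, h₁g, h₂i]⟩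

lemma exists_mulVec_mulVec_single_swap_eq {g : (Matrix ι ι ℤ)ˣ} (hg : g ∈ σ.soPlus)
    (hgS : g ∈ basisFixator ℤ S) {p : ι} (hp : p ∈ S) (hσp : σ.swap p ∉ S) :
    ∃ h ∈ σ.elementary ⊓ basisFixator ℤ S,
      (h : Matrix ι ι ℤ) *ᵥ ((g : Matrix ι ι ℤ) *ᵥ Pi.single (σ.swap p) 1) =
        Pi.single (σ.swap p) 1 := by
  have hcoord {s : ι} (hs : s ∈ S) :=
    σ.mulVec_apply_swap_of_mulVec_single hg (mem_basisFixator.1 hgS s hs) (Pi.single (σ.swap p) 1)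
  have hone := (hcoord hp).trans (Pi.single_eq_same _ _)
  obtain ⟨h, hh, hhg⟩ := σ.exists_mulVec_eq_single_of_dvd hσp (hone ▸ one_ne_zero)
    ((σ.dotProduct_gram_mulVec_mulVec hg _ _).trans
      (σ.single_dotProduct_gram_mulVec_single_self _ 1))
    (fun s hs hsp => by
      rw [swap_swap] at hsp
      rw [hcoord hs, Pi.single_eq_of_ne (mt σ.swap_inj.1 hsp)])
    (fun j _ => hone.symm ▸ one_dvd _)
  rw [hone] at hhg
  exact ⟨h, hh, hhg⟩

lemma exists_mul_mem_basisFixator (hS : ∀ s ∈ S, σ.swap s ∈ S) {g : (Matrix ι ι ℤ)ˣ}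
    (hg : g ∈ σ.soPlus) (hgS : g ∈ basisFixator ℤ S) {p r : ι} (hp : p ∉ S) (hr : r ∉ S)
    (hrp : r ≠ p) (hrσ : r ≠ σ.swap p) :
    ∃ h ∈ σ.elementary, h * g ∈ basisFixator ℤ (insert (σ.swap p) (insert p S)) := by
  obtain ⟨h₁, hh₁, h₁p⟩ := σ.exists_mulVec_mulVec_single_eq hS hg hgS hp hr hrp hrσ
  have hfix := mul_mem_basisFixator_insert hgS hh₁.2 h₁p
  have hσp : σ.swap p ∉ insert p S := fun h => (Set.mem_insert_iff.1 h).elim (σ.swap_ne p)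
    fun h => hp (σ.swap_swap p ▸ hS _ h)
  obtain ⟨h₂, hh₂, h₂p⟩ := σ.exists_mulVec_mulVec_single_swap_eq
    (mul_mem (σ.elementary_le_soPlus hh₁.1) hg) hfix (Set.mem_insert p S) hσp
  refine ⟨h₂ * h₁, mul_mem hh₂.1 hh₁.1, ?_⟩
  rw [mul_assoc]
  exact mul_mem_basisFixator_insert hfix hh₂.2 h₂p

end HyperbolicPairing

/-! ### Isometries of the last plane -/

namespace HyperbolicPairing

variable {ι : Type*} (σ : HyperbolicPairing ι)

lemma exists_transversal [Finite ι] (p : ι) : ∃ (k : ℕ) (e : Fin k → ι), Function.Injective e ∧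
    p ∈ Set.range e ∧ ∀ i, σ.swap i ∈ Set.range e ↔ i ∉ Set.range e := by
  cases nonempty_fintype ι
  obtain ⟨f, hf, hfp⟩ : ∃ f : ι → ℤ, Function.Injective f ∧ f p < f (σ.swap p) := by
    have hinj : Function.Injective fun i => ((Fintype.equivFin ι i : ℕ) : ℤ) :=
      Nat.cast_injective.comp (Fin.val_injective.comp (Equiv.injective _))
    rcases (hinj.ne (σ.swap_ne p)).lt_or_gt with h | h
    · exact ⟨_, neg_injective.comp hinj, neg_lt_neg h⟩
    · exact ⟨_, hinj, h⟩
  let R : Finset ι := {i | f i < f (σ.swap i)}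
  have hrange : Set.range (fun j => (R.equivFin.symm j : ι)) = R := by
    rw [← Function.comp_def, R.equivFin.symm.surjective.range_comp]
    exact Subtype.range_coe
  refine ⟨R.card, fun j => R.equivFin.symm j,
    Subtype.val_injective.comp R.equivFin.symm.injective, ?_, fun i => ?_⟩
  · simp [hrange, R, hfp]
  · have hne : f (σ.swap i) ≠ f i := hf.ne (σ.swap_ne i)
    simp [hrange, R, swap_swap, hne.le_iff_lt]

variable [Fintype ι] [DecidableEq ι]

lemma realForm_gram_apply (x y : ι → ℝ) :
    realForm (σ.gram ℤ) x y = x ⬝ᵥ σ.gram ℝ *ᵥ y := by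
  have hmap : (σ.gram ℤ).map (Int.cast : ℤ → ℝ) = σ.gram ℝ := by
    ext i j
    simp [gram, apply_ite]
  rw [realForm_apply, hmap]

lemma realForm_gram_planeVec (x : ι → ℝ) (p : ι) :
    realForm (σ.gram ℤ) x (σ.planeVec p 1 1) = x (σ.swap p) + x p := by
  rw [realForm_gram_apply, dotProduct_gram_mulVec_planeVec, mul_one, mul_one]

section Transversal

variable {k : ℕ} {e : Fin k → ι}

lemma crossGram_planeVec (he : Function.Injective e)
    (hσe : ∀ i, σ.swap i ∈ Set.range e ↔ i ∉ Set.range e) :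
    crossGram (realForm (σ.gram ℤ)) (fun j => σ.planeVec (e j) 1 1)
      (fun j => σ.planeVec (e j) 1 1) = diagonal fun _ => 2 := by
  ext i j
  rw [crossGram, of_apply, realForm_gram_planeVec]
  by_cases hij : i = j
  · rw [hij, planeVec_apply_swap, planeVec_apply_self, diagonal_apply_eq]
    norm_num
  · have hne : e j ≠ e i := he.ne (Ne.symm hij)
    have hswap (i j : Fin k) : σ.swap (e j) ≠ e i := fun h =>
      (hσe (e j)).1 ⟨i, h.symm⟩ ⟨j, rfl⟩
    rw [diagonal_apply_ne _ hij, σ.planeVec_apply_of_ne (hswap i j) (σ.swap_inj.not.2 hne),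
      σ.planeVec_apply_of_ne hne (hswap j i).symm, add_zero]

lemma isMaxPositive_planeVec (he : Function.Injective e)
    (hσe : ∀ i, σ.swap i ∈ Set.range e ↔ i ∉ Set.range e) :
    IsMaxPositive (realForm (σ.gram ℤ)) fun j => σ.planeVec (e j) 1 1 := by
  have hsymm := isSymm_realForm (σ.isSymm_gram ℤ)
  refine isMaxPositive_of_forall_orthogonal hsymm ?_ fun u hu => ?_
  · rw [σ.crossGram_planeVec he hσe]
    exact PosDef.diagonal fun _ => two_pos
  · have hu_range (j : Fin k) : u (σ.swap (e j)) + u (e j) = 0 := by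
      rw [← hu j, hsymm.eq, realForm_gram_planeVec]
    have hanti (i : ι) : u (σ.swap i) = -u i := by
      by_cases hi : i ∈ Set.range e
      · obtain ⟨j, rfl⟩ := hi
        exact eq_neg_of_add_eq_zero_left (hu_range j)
      · obtain ⟨j, hj⟩ := (hσe i).2 hi
        rw [← hj]
        exact eq_neg_of_add_eq_zero_right (σ.swap_swap i ▸ hj ▸ hu_range j)
    rw [realForm_gram_apply]
    refine Finset.sum_nonpos fun i _ => ?_
    rw [gram_mulVec_apply, hanti, mul_neg, neg_nonpos]
    exact mul_self_nonneg _

end Transversal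

lemma realMap_planeVec {g : Matrix ι ι ℤ} {p : ι} {c : ℤ}
    (hp : g *ᵥ Pi.single p 1 = Pi.single p c)
    (hσp : g *ᵥ Pi.single (σ.swap p) 1 = Pi.single (σ.swap p) c) :
    realMap g (σ.planeVec p 1 1) = (c : ℝ) • σ.planeVec p 1 1 := by
  have hcast (a : ℤ) : (a : ℝ) • σ.planeVec p 1 1 = fun i => ((σ.planeVec p a a i : ℤ) : ℝ) := by
    ext i
    simp [planeVec, Pi.single_apply, mul_add]
  have hg : g *ᵥ σ.planeVec p 1 1 = σ.planeVec p c c := by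
    rw [planeVec, mulVec_add, hp, hσp, planeVec]
  have hone : σ.planeVec p 1 1 = fun i => ((σ.planeVec p 1 1 i : ℤ) : ℝ) := by
    simpa using hcast 1
  conv_lhs => rw [hone]
  rw [realMap_intCast, hg, hcast]

lemma not_orientPres_of_mulVec_single_eq_neg {g : (Matrix ι ι ℤ)ˣ} {p : ι}
    (hg : g ∈ basisFixator ℤ {p, σ.swap p}ᶜ)
    (hp : (g : Matrix ι ι ℤ) *ᵥ Pi.single p 1 = Pi.single p (-1))
    (hσp : (g : Matrix ι ι ℤ) *ᵥ Pi.single (σ.swap p) 1 = Pi.single (σ.swap p) (-1)) :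
    ¬ OrientPres (σ.gram ℤ) (g : Matrix ι ι ℤ) := by
  obtain ⟨k, e, he, ⟨j₀, rfl⟩, hσe⟩ := σ.exists_transversal p
  rw [orientPres_iff]
  intro horient
  have hdet := horient k _ (σ.isMaxPositive_planeVec he hσe)
  have hmap (j : Fin k) : realMap (g : Matrix ι ι ℤ) (σ.planeVec (e j) 1 1) =
      ((if j = j₀ then -1 else 1 : ℤ) : ℝ) • σ.planeVec (e j) 1 1 := by
    split_ifs with hj
    · subst hj
      exact σ.realMap_planeVec hp hσp
    · have hne : e j ≠ e j₀ := he.ne hj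
      have hswap (i j : Fin k) : σ.swap (e j) ≠ e i := fun h =>
        (hσe (e j)).1 ⟨i, h.symm⟩ ⟨j, rfl⟩
      exact σ.realMap_planeVec
        (mem_basisFixator.1 hg _ (by simp [hne, (hswap j j₀).symm]))
        (mem_basisFixator.1 hg _ (by simp [hswap, σ.swap_inj, hne]))
  have hcross : crossGram (realForm (σ.gram ℤ)) (fun j => σ.planeVec (e j) 1 1)
      (realMap (g : Matrix ι ι ℤ) ∘ fun j => σ.planeVec (e j) 1 1) =
        diagonal (fun _ => 2) * diagonal fun j => ((if j = j₀ then -1 else 1 : ℤ) : ℝ) := by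
    ext i j
    rw [← σ.crossGram_planeVec he hσe, mul_diagonal, crossGram, of_apply, Function.comp_apply,
      hmap, map_smul, smul_eq_mul, mul_comm]
    rfl
  have hneg : (∏ j, ((if j = j₀ then -1 else 1 : ℤ) : ℝ)) = -1 := by simp
  rw [hcross, det_mul, det_diagonal, det_diagonal, hneg, Finset.prod_const] at hdet
  linarith [pow_pos (two_pos (α := ℝ)) (Finset.univ : Finset (Fin k)).card]

lemma det_eq_neg_one_of_mulVec_single_eq_single_swap {g : (Matrix ι ι ℤ)ˣ} {p : ι}
    (hg : g ∈ basisFixator ℤ {p, σ.swap p}ᶜ) {ε : ℤ} (hε : ε * ε = 1)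
    (hp : (g : Matrix ι ι ℤ) *ᵥ Pi.single p 1 = Pi.single (σ.swap p) ε)
    (hσp : (g : Matrix ι ι ℤ) *ᵥ Pi.single (σ.swap p) 1 = Pi.single p ε) :
    (g : Matrix ι ι ℤ).det = -1 := by
  have hreflection : (g : Matrix ι ι ℤ) =
      1 + vecMulVec (σ.planeVec p (-1) ε) (σ.planeVec p 1 (-ε)) := by
    refine ext_of_mulVec_single fun s => ?_
    rw [add_mulVec, one_mulVec, vecMulVec_mulVec, dotProduct_single, mul_one]
    by_cases hsp : s = p
    · rw [hsp, hp, planeVec_apply_self, MulOpposite.op_one, one_smul, planeVec, Pi.single_neg,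
        add_neg_cancel_left]
    by_cases hsσ : s = σ.swap p
    · rw [hsσ, hσp, planeVec_apply_swap, planeVec]
      simp [smul_add, ← Pi.single_smul, Pi.single_neg, hε]
    · rw [mem_basisFixator.1 hg s (by simp [hsp, hsσ]), σ.planeVec_apply_of_ne hsp hsσ]
      simp
  have hdot : σ.planeVec p 1 (-ε) ⬝ᵥ σ.planeVec p (-1) ε = -1 - ε * ε := by
    simp [planeVec, σ.swap_ne p, (σ.swap_ne p).symm, sub_eq_add_neg]
  rw [hreflection, det_one_add_vecMulVec, hdot, hε]
  norm_num

lemma exists_eq_single_of_isotropic {p : ι} {x y : ι → ℤ}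
    (hx : ∀ i, i ≠ p → i ≠ σ.swap p → x i = 0) (hy : ∀ i, i ≠ p → i ≠ σ.swap p → y i = 0)
    (hxx : x ⬝ᵥ σ.gram ℤ *ᵥ x = 0) (hyy : y ⬝ᵥ σ.gram ℤ *ᵥ y = 0)
    (hxy : x ⬝ᵥ σ.gram ℤ *ᵥ y = 1) :
    ∃ ε : ℤ, IsUnit ε ∧ (x = Pi.single p ε ∧ y = Pi.single (σ.swap p) ε ∨
      x = Pi.single (σ.swap p) ε ∧ y = Pi.single p ε) := by
  have hsingle_swap {z : ι → ℤ} (hz : ∀ i, i ≠ p → i ≠ σ.swap p → z i = 0)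
      (hzz : z ⬝ᵥ σ.gram ℤ *ᵥ z = 0) (hne : z (σ.swap p) ≠ 0) :
      z = Pi.single (σ.swap p) (z (σ.swap p)) :=
    σ.eq_single_of_isotropic hne hzz fun i hiσ hip => hz i (σ.swap_swap p ▸ hip) hiσ
  rw [σ.eq_planeVec hy, dotProduct_gram_mulVec_planeVec] at hxy
  by_cases hxp : x p = 0
  · rw [hxp, zero_mul, add_zero] at hxy
    have heq : y p = x (σ.swap p) := (Int.eq_of_mul_eq_one hxy).symm
    have hunit : IsUnit (x (σ.swap p)) := IsUnit.of_mul_eq_one _ hxy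
    exact ⟨_, hunit, Or.inr ⟨hsingle_swap hx hxx hunit.ne_zero,
      heq ▸ σ.eq_single_of_isotropic (heq ▸ hunit.ne_zero) hyy hy⟩⟩
  · have hx_single := σ.eq_single_of_isotropic hxp hxx hx
    have hxσ : x (σ.swap p) = 0 := by rw [hx_single, Pi.single_eq_of_ne (σ.swap_ne p)]
    rw [hxσ, zero_mul, zero_add] at hxy
    have heq : y (σ.swap p) = x p := (Int.eq_of_mul_eq_one hxy).symm
    exact ⟨_, IsUnit.of_mul_eq_one _ hxy, Or.inl ⟨hx_single,
      heq ▸ hsingle_swap hy hyy (heq ▸ hxp)⟩⟩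

lemma exists_mulVec_single_eq_of_mem_basisFixator_compl {g : (Matrix ι ι ℤ)ˣ} (hg : g ∈ σ.soPlus)
    {p : ι} (hgp : g ∈ basisFixator ℤ {p, σ.swap p}ᶜ) :
    ∃ ε : ℤ, IsUnit ε ∧
      ((g : Matrix ι ι ℤ) *ᵥ Pi.single p 1 = Pi.single p ε ∧
          (g : Matrix ι ι ℤ) *ᵥ Pi.single (σ.swap p) 1 = Pi.single (σ.swap p) ε ∨
        (g : Matrix ι ι ℤ) *ᵥ Pi.single p 1 = Pi.single (σ.swap p) ε ∧
          (g : Matrix ι ι ℤ) *ᵥ Pi.single (σ.swap p) 1 = Pi.single p ε) := by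
  have hstable : ∀ s ∈ ({p, σ.swap p}ᶜ : Set ι), σ.swap s ∈ ({p, σ.swap p}ᶜ : Set ι) := by
    simp +contextual [σ.swap_eq_iff, σ.swap_swap]
  have hsupp (q : ι) (hq : q = p ∨ q = σ.swap p) (i : ι) (hip : i ≠ p) (hiσ : i ≠ σ.swap p) :
      ((g : Matrix ι ι ℤ) *ᵥ Pi.single q 1) i = 0 :=
    σ.mulVec_apply_eq_zero hstable hg hgp
      (fun s hs => Pi.single_eq_of_ne (by rintro rfl; exact hs hq) _) (by simp [hip, hiσ])
  refine σ.exists_eq_single_of_isotropic (hsupp p (Or.inl rfl)) (hsupp _ (Or.inr rfl)) ?_ ?_ ?_ <;>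
    rw [σ.dotProduct_gram_mulVec_mulVec hg]
  · exact σ.single_dotProduct_gram_mulVec_single_self p 1
  · exact σ.single_dotProduct_gram_mulVec_single_self _ 1
  · rw [dotProduct_gram_mulVec_single, swap_swap, Pi.single_eq_same, one_mul]

lemma eq_one_of_mem_basisFixator_compl {g : (Matrix ι ι ℤ)ˣ} (hg : g ∈ σ.soPlus) {p : ι}
    (hgp : g ∈ basisFixator ℤ {p, σ.swap p}ᶜ) : g = 1 := by
  obtain ⟨ε, hε, ⟨hp, hσp⟩ | ⟨hp, hσp⟩⟩ :=
    σ.exists_mulVec_single_eq_of_mem_basisFixator_compl hg hgp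
  · rcases Int.isUnit_iff.1 hε with rfl | rfl
    · rw [← Subgroup.mem_bot, ← basisFixator_univ, mem_basisFixator]
      intro s _
      by_cases hs : s = p ∨ s = σ.swap p
      · rcases hs with rfl | rfl <;> assumption
      · exact mem_basisFixator.1 hgp s hs
    · exact absurd hg.2.2 (σ.not_orientPres_of_mulVec_single_eq_neg hgp hp hσp)
  · have hdet := σ.det_eq_neg_one_of_mulVec_single_eq_single_swap hgp
      (Int.isUnit_mul_self hε) hp hσp
    rw [hg.2.1] at hdet
    norm_num at hdet

lemma mem_elementary_of_mem_basisFixator (S : Set ι) (hS : ∀ s ∈ S, σ.swap s ∈ S)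
    {g : (Matrix ι ι ℤ)ˣ} (hg : g ∈ σ.soPlus) (hgS : g ∈ basisFixator ℤ S) :
    g ∈ σ.elementary := by
  induction S using WellFoundedGT.induction generalizing g with
  | ind S ih =>
    by_cases huniv : S = Set.univ
    · rw [huniv, basisFixator_univ, Subgroup.mem_bot] at hgS
      exact hgS ▸ one_mem _
    obtain ⟨p, hp⟩ := (Set.ne_univ_iff_exists_notMem S).1 huniv
    by_cases hplane : ∃ r ∉ S, r ≠ p ∧ r ≠ σ.swap p
    · obtain ⟨r, hr, hrp, hrσ⟩ := hplane
      obtain ⟨h, hh, hhg⟩ := σ.exists_mul_mem_basisFixator hS hg hgS hp hr hrp hrσ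
      have hlt : S < insert (σ.swap p) (insert p S) :=
        (Set.ssubset_insert hp).trans_subset (Set.subset_insert _ _)
      have hstable : ∀ s ∈ insert (σ.swap p) (insert p S),
          σ.swap s ∈ insert (σ.swap p) (insert p S) := by
        rintro s (rfl | rfl | hs)
        · simp [swap_swap]
        · exact Set.mem_insert _ _
        · exact hlt.le (hS s hs)
      exact (mul_mem_cancel_left hh).1
        (ih _ hlt hstable (mul_mem (σ.elementary_le_soPlus hh) hg) hhg)
    · have hcompl : g ∈ basisFixator ℤ {p, σ.swap p}ᶜ := mem_basisFixator.2 fun s hs =>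
        mem_basisFixator.1 hgS s (by_contra fun hsS => hplane ⟨s, hsS, by simpa using hs⟩)
      rw [σ.eq_one_of_mem_basisFixator_compl hg hcompl]
      exact one_mem _

theorem elementary_eq_soPlus : σ.elementary = σ.soPlus :=
  σ.elementary_le_soPlus.antisymm fun g hg =>
    σ.mem_elementary_of_mem_basisFixator ∅ (by simp) hg (mem_basisFixator.2 (by simp))

end HyperbolicPairing

/-! ### Generation by stabilizers -/

namespace HyperbolicPairing

variable {ι : Type*} [Fintype ι] [DecidableEq ι] (σ : HyperbolicPairing ι)

/-- The stabilizer of `v` in the group `SO⁺` of the orthogonal sum of hyperbolic planes. -/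
abbrev soPlusStabilizer (v : ι → ℤ) : Subgroup (Matrix ι ι ℤ)ˣ :=
  σ.soPlus ⊓ vecStabilizer v

lemma transvection_mul_transvection_mem_soPlusStabilizer {i p : ι} (hip : i ≠ p)
    (hiσ : i ≠ σ.swap p) {s t x y : ℤ} (h : s * x + t * y = 0) :
    σ.transvection hip s * σ.transvection hiσ t ∈ σ.soPlusStabilizer (σ.planeVec p x y) := by
  refine ⟨mul_mem (σ.transvection_mem_soPlus hip s) (σ.transvection_mem_soPlus hiσ t), ?_⟩
  have hσi : σ.planeVec p x y (σ.swap i) = 0 :=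
    σ.planeVec_apply_of_ne (fun h => hiσ (σ.swap_eq_iff.1 h)) (mt σ.swap_inj.1 hip) x y
  have hcoeff : t * y + s * x = 0 := by rw [add_comm, h]
  change (_ : Matrix ι ι ℤ) *ᵥ _ = _
  rw [Units.val_mul, ← mulVec_mulVec, transvection_mulVec, transvection_mulVec]
  simp [hσi, planeVec_apply_self, planeVec_apply_swap, hip.symm, σ.swap_ne,
    swap_swap, add_assoc, ← Pi.single_add, hcoeff]

lemma transvection_mem_sup_soPlusStabilizer {i p : ι} (hip : i ≠ p) (hiσ : i ≠ σ.swap p)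
    (n d : ℤ) :
    σ.transvection hip n ∈ σ.soPlusStabilizer (σ.planeVec p 1 d) ⊔
      σ.soPlusStabilizer (σ.planeVec p 1 (d + 1)) := by
  have hd := σ.transvection_mul_transvection_mem_soPlusStabilizer hip hiσ
    (s := -(n * d)) (t := n) (x := 1) (y := d) (by ring)
  have hd' := σ.transvection_mul_transvection_mem_soPlusStabilizer hip hiσ
    (s := -(n * (d + 1))) (t := n) (x := 1) (y := d + 1) (by ring)
  have hsplit : σ.transvection hip n =
      σ.transvection hip (-(n * d)) * σ.transvection hiσ n *
        (σ.transvection hip (-(n * (d + 1))) * σ.transvection hiσ n)⁻¹ := by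
    rw [_root_.mul_inv_rev, mul_assoc, mul_inv_cancel_left, eq_mul_inv_iff_mul_eq,
      ← transvection_add]
    congr 1
    ring
  rw [hsplit]
  exact mul_mem (Subgroup.mem_sup_left hd) (Subgroup.mem_sup_right (inv_mem hd'))

lemma transvection_mem_soPlusStabilizer {i j : ι} (hij : i ≠ j) (n : ℤ) {v : ι → ℤ}
    (hj : v j = 0) (hi : v (σ.swap i) = 0) : σ.transvection hij n ∈ σ.soPlusStabilizer v := by
  refine ⟨σ.transvection_mem_soPlus hij n, (σ.transvection_mulVec hij n v).trans ?_⟩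
  simp [hj, hi]

lemma elementary_le_of_soPlusStabilizer_le {H : Subgroup (Matrix ι ι ℤ)ˣ} {p : ι} {x y : ℤ}
    (hstab : σ.soPlusStabilizer (σ.planeVec p x y) ≤ H)
    (hH : ∀ {i q : ι} (hiq : i ≠ q), i ≠ σ.swap q → q = p ∨ q = σ.swap p →
      ∀ n, σ.transvection hiq n ∈ H) : σ.elementary ≤ H := by
  rw [elementary, Subgroup.closure_le]
  rintro _ ⟨i, j, hij, n, rfl⟩
  by_cases hiσ : i = σ.swap j
  · rw [σ.transvection_eq_one hij hiσ]
    exact one_mem H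
  by_cases hj : j = p ∨ j = σ.swap p
  · exact hH hij hiσ hj n
  by_cases hi : i = p ∨ i = σ.swap p
  · rw [← σ.transvection_swap_swap hij]
    refine hH _ (fun h => hiσ (by rw [h, swap_swap])) ?_ _
    rwa [σ.swap_eq_iff, σ.swap_inj, or_comm]
  rw [not_or] at hi hj
  exact hstab (σ.transvection_mem_soPlusStabilizer hij n (σ.planeVec_apply_of_ne hj.1 hj.2 x y)
    (σ.planeVec_apply_of_ne (mt σ.swap_eq_iff.1 hi.2) (mt σ.swap_inj.1 hi.1) x y))

end HyperbolicPairing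

theorem stmt_6_general {ι : Type*} [Fintype ι] [DecidableEq ι] (σ : HyperbolicPairing ι) (p : ι)
    (d : ℤ) :
    σ.soPlusStabilizer (σ.planeVec p 1 d) ⊔ σ.soPlusStabilizer (σ.planeVec p d 1) ⊔
      σ.soPlusStabilizer (σ.planeVec p 1 (d + 1)) ⊔
      σ.soPlusStabilizer (σ.planeVec p (d + 1) 1) = σ.soPlus := by
  refine le_antisymm (by simp only [sup_le_iff, inf_le_left, and_self]) ?_
  rw [← σ.elementary_eq_soPlus]
  refine σ.elementary_le_of_soPlusStabilizer_le
    (le_sup_left.trans (le_sup_left.trans le_sup_left)) fun {i q} hiq hiσ hq n => ?_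
  have hmem := σ.transvection_mem_sup_soPlusStabilizer hiq hiσ n d
  rcases hq with rfl | rfl
  · exact SetLike.le_def.1 ((sup_le_sup_right le_sup_left _).trans le_sup_left) hmem
  · rw [σ.planeVec_swap, σ.planeVec_swap] at hmem
    exact SetLike.le_def.1 (sup_le_sup_right (le_sup_right.trans le_sup_left) _) hmem

/-- The pairing of the standard basis `e₁, f₁, e₂, f₂, e₃, f₃` of `U³`. -/
def u3Pairing : HyperbolicPairing (Fin 6) where
  swap := ![1, 0, 3, 2, 5, 4]
  swap_swap := by decide
  swap_ne := by decide

lemma gram_u3Pairing : u3Pairing.gram ℤ = U3G := by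
  decide

lemma planeVec_u3Pairing (x y : ℤ) : u3Pairing.planeVec 0 x y = ![x, y, 0, 0, 0, 0] := by
  ext i
  fin_cases i <;> simp [HyperbolicPairing.planeVec, u3Pairing]

lemma coe_soPlus_u3Pairing : (u3Pairing.soPlus : Set (Matrix (Fin 6) (Fin 6) ℤ)ˣ) =
    {g : (Matrix (Fin 6) (Fin 6) ℤ)ˣ | IsIsometry U3G (g : Matrix (Fin 6) (Fin 6) ℤ) ∧
      (g : Matrix (Fin 6) (Fin 6) ℤ).det = 1 ∧ OrientPres U3G (g : Matrix (Fin 6) (Fin 6) ℤ)} := by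
  simp only [← gram_u3Pairing]
  rfl

lemma coe_soPlusStabilizer_u3Pairing (x y : ℤ) :
    (u3Pairing.soPlusStabilizer (u3Pairing.planeVec 0 x y) : Set (Matrix (Fin 6) (Fin 6) ℤ)ˣ) =
      SOplusStab ![x, y, 0, 0, 0, 0] := by
  ext g
  rw [Subgroup.coe_inf, coe_soPlus_u3Pairing, planeVec_u3Pairing]
  simp only [SOplusStab, Set.mem_inter_iff, Set.mem_ofPred_eq, SetLike.mem_coe, mem_vecStabilizer,
    and_assoc]

/-- For every `d ≥ 1`, the group `SO⁺(U³)` is generated by the union of the stabilizers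
`SO⁺_{e₁+df₁}(U³) ∪ SO⁺_{de₁+f₁}(U³) ∪ SO⁺_{e₁+(d+1)f₁}(U³) ∪ SO⁺_{(d+1)e₁+f₁}(U³)`,
where `{e₁,f₁}` is the standard basis of the first copy of `U` in `U³`. -/
theorem stmt_6 (d : ℤ) (hd : 0 < d) :
    (Subgroup.closure
        (SOplusStab ![1, d, 0, 0, 0, 0] ∪ SOplusStab ![d, 1, 0, 0, 0, 0] ∪
          SOplusStab ![1, d + 1, 0, 0, 0, 0] ∪ SOplusStab ![d + 1, 1, 0, 0, 0, 0]) :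
      Set ((Matrix (Fin 6) (Fin 6) ℤ)ˣ)) =
    {g : (Matrix (Fin 6) (Fin 6) ℤ)ˣ |
      IsIsometry U3G (g : Matrix (Fin 6) (Fin 6) ℤ) ∧
        (g : Matrix (Fin 6) (Fin 6) ℤ).det = 1 ∧
        OrientPres U3G (g : Matrix (Fin 6) (Fin 6) ℤ)} := by
  rw [← coe_soPlus_u3Pairing, ← stmt_6_general u3Pairing 0 d]
  simp only [← coe_soPlusStabilizer_u3Pairing, Subgroup.closure_union, Subgroup.closure_eq]
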